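/- (Upper-bound half of Theorem 1.) Let $k \ge 1$, $s \ge 4k$, $n \ge 0$ and $N = 2^n(s-4k)+4k+1$. Then no adaptive strategy with $n$ tests on the cycle $C_N$ is $(C_N,s)$-successful: for every strategy there is a consistent answer sequence with $|\mathcal{D}_i| \ge (s-4k)2^{n-i}+4k+1$ for all $0 \le i \le n$, so $|\mathcal{D}_n| \ge s+1$. -/

import Mathlib

/-!
The adversary always keeps a part, `T ∩ D` or `D \ T`, that has roughly half the elements of `D`
or more; the larger part always qualifies.

The only geometric input is an isoperimetric inequality on the cycle: a nonempty `A` satisfies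
`|cycStep N A| ≥ min N (|A| + 2)` (`card_cycStep`), hence `|GammaC N k A| ≥ min N (|A| + 2k)`
(`card_GammaC`). If `A` has a boundary, it has an exit point `a + 1 ∉ A` going clockwise and
an exit point `b - 1 ∉ A` going counterclockwise. When all of these coincide in a single
vertex `z`, the set `A ∪ {z}` is closed under the clockwise successor, hence is the whole cycle.

With `a = s - 4k` and `|D| ≥ 2a·2^m + 4k + 1`, the larger part has at least `a·2^m + 2k + 1`
elements, and expanding it by `GammaC` brings the size back to at least `a·2^m + 4k + 1`.
-/

open Finset

/-- One-step neighborhood on the cycle `C_N` (vertices `1..N`, loop at every vertex). -/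
def cycStep (N : ℕ) (A : Finset ℕ) : Finset ℕ :=
  (Finset.Icc 1 N).filter fun j => ∃ i ∈ A, j = i ∨ i + 1 = j ∨ j + 1 = i ∨
    (i = N ∧ j = 1) ∨ (i = 1 ∧ j = N)

/-- One-step neighborhood on the path `P_N` (vertices `1..N`, loop at every vertex). -/
def pathStep (N : ℕ) (A : Finset ℕ) : Finset ℕ :=
  (Finset.Icc 1 N).filter fun j => ∃ i ∈ A, j = i ∨ i + 1 = j ∨ j + 1 = i

/-- `k`-neighborhood on the cycle `C_N`. -/
def GammaC (N k : ℕ) (A : Finset ℕ) : Finset ℕ := (cycStep N)^[k] A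

/-- `k`-neighborhood on the path `P_N`. -/
def GammaP (N k : ℕ) (A : Finset ℕ) : Finset ℕ := (pathStep N)^[k] A

/-- Candidate sets `𝒟_i` for an adaptive strategy `σ` (mapping the list of previous
answers to the next test set), an answer sequence `y`, expansion `Γ`, and initial
candidate set `D0`. -/
def Dadapt (Γ : Finset ℕ → Finset ℕ) (σ : List Bool → Finset ℕ) (D0 : Finset ℕ)
    (y : ℕ → Bool) : ℕ → Finset ℕ
  | 0 => D0
  | i + 1 =>
      let D := Dadapt Γ σ D0 y i
      let T := σ ((List.range i).map y)
      if y i then Γ (T ∩ D) else Γ (D \ T)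

/-- There is an adaptive strategy with `n` tests that is successful with accuracy `s`:
for every consistent answer sequence some candidate set has size at most `s`. -/
def Successful (Γ : Finset ℕ → Finset ℕ) (D0 : Finset ℕ) (n s : ℕ) : Prop :=
  ∃ σ : List Bool → Finset ℕ, ∀ y : ℕ → Bool,
    (∀ i ≤ n, (Dadapt Γ σ D0 y i).Nonempty) →
    ∃ i ≤ n, (Dadapt Γ σ D0 y i).card ≤ s

/-- `(C_N, s)`-successful adaptive strategy with `n` tests exists. -/
def cycSuccessful (N k n s : ℕ) : Prop :=
  Successful (GammaC N k) (Finset.Icc 1 N) n s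

/-- `(P_N, s)`-successful adaptive strategy with `n` tests exists. -/
def pathSuccessful (N k n s : ℕ) : Prop :=
  Successful (GammaP N k) (Finset.Icc 1 N) n s

/-- `s^*(C_N)`: minimum accuracy achievable on the cycle. -/
noncomputable def sStarC (N k : ℕ) : ℕ := sInf {s | ∃ n, cycSuccessful N k n s}

/-- `s^*(P_N)`: minimum accuracy achievable on the path. -/
noncomputable def sStarP (N k : ℕ) : ℕ := sInf {s | ∃ n, pathSuccessful N k n s}

/-- Clockwise successor on the cycle with vertices `1..N`. -/
def cycSucc (N x : ℕ) : ℕ := if x = N then 1 else x + 1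

/-- Counterclockwise successor on the cycle with vertices `1..N`. -/
def cycPred (N x : ℕ) : ℕ := if x = 1 then N else x - 1

lemma eq_Icc_of_cycSucc_closed {N : ℕ} {C : Finset ℕ} (hC : C ⊆ Icc 1 N) (hne : C.Nonempty)
    (h : ∀ x ∈ C, cycSucc N x ∈ C) : C = Icc 1 N := by
  obtain ⟨a, ha⟩ := hne
  have haN := mem_Icc.1 (hC ha)
  -- Walking clockwise from a member `b` reaches everything up to `N`.
  have up : ∀ b ∈ C, ∀ x, b ≤ x → x ≤ N → x ∈ C := by
    intro b hb x hx
    induction x, hx using Nat.le_induction with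
    | base => intro _; exact hb
    | succ x hx ih =>
      intro hxN
      have := h x (ih (by omega))
      rwa [cycSucc, if_neg (by omega)] at this
  have hN := h N (up a ha N haN.2 le_rfl)
  rw [cycSucc, if_pos rfl] at hN
  refine hC.antisymm fun x hx => ?_
  rw [mem_Icc] at hx
  exact up 1 hN x hx.1 hx.2

lemma eq_Icc_of_cycPred_closed {N : ℕ} {C : Finset ℕ} (hC : C ⊆ Icc 1 N) (hne : C.Nonempty)
    (h : ∀ x ∈ C, cycPred N x ∈ C) : C = Icc 1 N := by
  -- The predecessor map is injective on the finite set `C`, hence onto `C`, so `C` is closed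
  -- under the successor as well.
  refine eq_Icc_of_cycSucc_closed hC hne fun x hx => ?_
  have hinj : Set.InjOn (cycPred N) C := by
    intro u hu v hv huv
    have := mem_Icc.1 (hC hu)
    have := mem_Icc.1 (hC hv)
    unfold cycPred at huv
    split_ifs at huv <;> omega
  obtain ⟨y, hy, hyx⟩ := Finset.surjOn_of_injOn_of_card_le (cycPred N) h hinj le_rfl hx
  have hy' := mem_Icc.1 (hC hy)
  have : cycSucc N x = y := by
    rw [← hyx]
    unfold cycSucc cycPred
    split_ifs <;> omega
  rwa [this]

lemma subset_cycStep {N : ℕ} {A : Finset ℕ} (hA : A ⊆ Icc 1 N) : A ⊆ cycStep N A :=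
  fun x hx => mem_filter.2 ⟨hA hx, x, hx, Or.inl rfl⟩

lemma cycStep_subset (N : ℕ) (A : Finset ℕ) : cycStep N A ⊆ Icc 1 N := filter_subset _ _

lemma cycSucc_mem_cycStep {N x : ℕ} {A : Finset ℕ} (hA : A ⊆ Icc 1 N) (hx : x ∈ A) :
    cycSucc N x ∈ cycStep N A := by
  have := mem_Icc.1 (hA hx)
  refine mem_filter.2 ⟨?_, x, hx, ?_⟩
  · rw [mem_Icc, cycSucc]; split_ifs <;> omega
  · rw [cycSucc]; split_ifs <;> omega

lemma cycPred_mem_cycStep {N x : ℕ} {A : Finset ℕ} (hA : A ⊆ Icc 1 N) (hx : x ∈ A) :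
    cycPred N x ∈ cycStep N A := by
  have := mem_Icc.1 (hA hx)
  refine mem_filter.2 ⟨?_, x, hx, ?_⟩
  · rw [mem_Icc, cycPred]; split_ifs <;> omega
  · rw [cycPred]; split_ifs <;> omega

lemma card_add_two_le {A B : Finset ℕ} (hAB : A ⊆ B) {u v : ℕ} (hu : u ∈ B) (hv : v ∈ B)
    (huA : u ∉ A) (hvA : v ∉ A) (huv : u ≠ v) : A.card + 2 ≤ B.card := by
  have h1 : (insert u (insert v A)).card = A.card + 2 := by
    rw [card_insert_of_notMem (by simp [huv, huA]), card_insert_of_notMem hvA]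
  rw [← h1]
  exact card_le_card (insert_subset hu (insert_subset hv hAB))

/-- Isoperimetric inequality for one step on the cycle. -/
lemma card_cycStep {N : ℕ} {A : Finset ℕ} (hA : A ⊆ Icc 1 N) (hne : A.Nonempty) :
    min N (A.card + 2) ≤ (cycStep N A).card := by
  have hAB := subset_cycStep hA
  -- It suffices to exhibit a subset of `cycStep N A` that is the whole cycle.
  have full : ∀ C ⊆ cycStep N A, C = Icc 1 N → min N (A.card + 2) ≤ (cycStep N A).card := by
    intro C hC h
    have := card_le_card hC
    rw [h, Nat.card_Icc] at this
    omega
  by_cases hs : ∀ x ∈ A, cycSucc N x ∈ A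
  · exact full A hAB (eq_Icc_of_cycSucc_closed hA hne hs)
  by_cases hp : ∀ x ∈ A, cycPred N x ∈ A
  · exact full A hAB (eq_Icc_of_cycPred_closed hA hne hp)
  push Not at hs hp
  obtain ⟨a, ha, haA⟩ := hs
  obtain ⟨b, hb, hbA⟩ := hp
  have hpb := cycPred_mem_cycStep hA hb
  by_cases hab : cycSucc N a = cycPred N b
  swap
  · exact (min_le_right _ _).trans
      (card_add_two_le hAB (cycSucc_mem_cycStep hA ha) hpb haA hbA hab)
  by_cases hc : ∀ x ∈ A, cycSucc N x ∈ insert (cycPred N b) A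
  · have hsub := insert_subset hpb hAB
    refine full _ hsub (eq_Icc_of_cycSucc_closed (hsub.trans (cycStep_subset N A))
      (insert_nonempty _ _) fun x hx => ?_)
    rcases mem_insert.1 hx with rfl | hx
    · have := mem_Icc.1 (hA hb)
      have hback : cycSucc N (cycPred N b) = b := by
        unfold cycSucc cycPred
        split_ifs <;> omega
      rw [hback]
      exact mem_insert_of_mem hb
    · exact hc x hx
  · push Not at hc
    obtain ⟨c, hc, hcA⟩ := hc
    rw [mem_insert, not_or] at hcA
    exact (min_le_right _ _).trans
      (card_add_two_le hAB (cycSucc_mem_cycStep hA hc) hpb hcA.2 hbA hcA.1)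

lemma GammaC_subset {N : ℕ} (k : ℕ) {A : Finset ℕ} (hA : A ⊆ Icc 1 N) :
    GammaC N k A ⊆ Icc 1 N := by
  cases k with
  | zero => exact hA
  | succ k =>
    rw [GammaC, Function.iterate_succ_apply']
    exact cycStep_subset _ _

lemma card_GammaC {N : ℕ} (k : ℕ) {A : Finset ℕ} (hA : A ⊆ Icc 1 N) (hne : A.Nonempty) :
    min N (A.card + 2 * k) ≤ (GammaC N k A).card := by
  induction k with
  | zero => exact min_le_right _ _
  | succ k ih =>
    have hsub : GammaC N k A ⊆ Icc 1 N := GammaC_subset k hA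
    have hpos := hne.card_pos
    have hN := card_le_card hA
    rw [Nat.card_Icc] at hN
    have := card_cycStep hsub (card_pos.1 (by omega))
    have heq : GammaC N (k + 1) A = cycStep N (GammaC N k A) :=
      Function.iterate_succ_apply' _ _ _
    rw [heq]
    omega

lemma Dadapt_subset {N k : ℕ} (σ : List Bool → Finset ℕ) (y : ℕ → Bool) (i : ℕ) :
    Dadapt (GammaC N k) σ (Icc 1 N) y i ⊆ Icc 1 N := by
  induction i with
  | zero => exact Subset.refl _
  | succ i ih =>
    rw [Dadapt]
    split_ifs
    · exact GammaC_subset k (inter_subset_right.trans ih)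
    · exact GammaC_subset k (sdiff_subset.trans ih)

/-- The candidate set after `i` tests depends only on the first `i` answers. -/
lemma Dadapt_congr (Γ : Finset ℕ → Finset ℕ) (σ : List Bool → Finset ℕ) (D0 : Finset ℕ)
    {y y' : ℕ → Bool} (i : ℕ) (h : ∀ j < i, y j = y' j) :
    Dadapt Γ σ D0 y i = Dadapt Γ σ D0 y' i := by
  induction i with
  | zero => rfl
  | succ i ih =>
    have hmap : (List.range i).map y = (List.range i).map y' :=
      List.map_congr_left fun j hj => h j (by have := List.mem_range.1 hj; omega)
    simp only [Dadapt, hmap, ih fun j hj => h j (by omega), h i (by omega)]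

/-- Halving step: one of the two answers to a test `T` keeps the candidate set large. -/
lemma exists_answer {N k c : ℕ} {D : Finset ℕ} (T : Finset ℕ) (hD : D ⊆ Icc 1 N)
    (hc : 2 * c + 4 * k + 1 ≤ D.card) :
    ∃ b : Bool, c + 4 * k + 1 ≤
      (if b then GammaC N k (T ∩ D) else GammaC N k (D \ T)).card := by
  have hN := card_le_card hD
  rw [Nat.card_Icc] at hN
  have key : ∀ A ⊆ D, c + 2 * k + 1 ≤ A.card → c + 4 * k + 1 ≤ (GammaC N k A).card := by
    intro A hA hcard
    have := card_GammaC k (hA.trans hD) (card_pos.1 (by omega))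
    omega
  have hsplit := card_inter_add_card_sdiff D T
  rw [inter_comm] at hsplit
  -- The `+ 1` in the hypothesis makes the larger part have at least `c + 2k + 1` elements.
  by_cases h : c + 2 * k + 1 ≤ (T ∩ D).card
  · exact ⟨true, by simpa using key _ inter_subset_right h⟩
  · exact ⟨false, by simpa using key _ sdiff_subset (by omega)⟩

lemma exists_adversary {N k a n : ℕ} (hN : N = 2 ^ n * a + 4 * k + 1)
    (σ : List Bool → Finset ℕ) (m : ℕ) (hm : m ≤ n) :
    ∃ y : ℕ → Bool, ∀ i ≤ m,
      a * 2 ^ (n - i) + 4 * k + 1 ≤ (Dadapt (GammaC N k) σ (Icc 1 N) y i).card := by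
  induction m with
  | zero =>
    refine ⟨fun _ => true, fun i hi => ?_⟩
    obtain rfl : i = 0 := by omega
    rw [Dadapt, Nat.card_Icc, hN, Nat.sub_zero, mul_comm a]
    omega
  | succ m ih =>
    obtain ⟨y, hy⟩ := ih (by omega)
    have hpow : a * 2 ^ (n - m) = 2 * (a * 2 ^ (n - (m + 1))) := by
      rw [show n - m = (n - (m + 1)) + 1 by omega, pow_succ]
      ring
    have hym := hy m le_rfl
    rw [hpow] at hym
    obtain ⟨b, hb⟩ := exists_answer (σ ((List.range m).map y)) (Dadapt_subset σ y m) hym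
    have hagree : ∀ j < m, Function.update y m b j = y j := fun j hj =>
      Function.update_of_ne (by omega) _ _
    refine ⟨Function.update y m b, fun i hi => ?_⟩
    rcases Nat.lt_or_ge m i with h | h
    · obtain rfl : i = m + 1 := by omega
      have hmap : (List.range m).map (Function.update y m b) = (List.range m).map y :=
        List.map_congr_left fun j hj => hagree j (List.mem_range.1 hj)
      simpa only [Dadapt, hmap, Dadapt_congr _ σ _ m hagree, Function.update_self] using hb
    · rw [Dadapt_congr _ σ _ i fun j hj => hagree j (by omega)]
      exact hy i h

/-- Upper-bound half of Theorem 1: for `N = 2^n(s-4k)+4k+1` no strategy with `n`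
tests is `(C_N,s)`-successful; for every strategy there is a consistent answer
sequence with `|𝒟_i| ≥ (s-4k)·2^{n-i}+4k+1` for all `i ≤ n`, so `|𝒟_n| ≥ s+1`. -/
theorem cycle_upper_bound_adversary (k s n : ℕ) (hk : 1 ≤ k) (hs : 4 * k ≤ s) :
    ¬ cycSuccessful (2 ^ n * (s - 4 * k) + 4 * k + 1) k n s ∧
    ∀ σ : List Bool → Finset ℕ, ∃ y : ℕ → Bool,
      (∀ i ≤ n,
        (Dadapt (GammaC (2 ^ n * (s - 4 * k) + 4 * k + 1) k) σ
          (Finset.Icc 1 (2 ^ n * (s - 4 * k) + 4 * k + 1)) y i).Nonempty) ∧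
      ∀ i ≤ n,
        (s - 4 * k) * 2 ^ (n - i) + 4 * k + 1 ≤
          (Dadapt (GammaC (2 ^ n * (s - 4 * k) + 4 * k + 1) k) σ
            (Finset.Icc 1 (2 ^ n * (s - 4 * k) + 4 * k + 1)) y i).card := by
  have main : ∀ σ : List Bool → Finset ℕ, ∃ y : ℕ → Bool, ∀ i ≤ n,
      (s - 4 * k) * 2 ^ (n - i) + 4 * k + 1 ≤
        (Dadapt (GammaC (2 ^ n * (s - 4 * k) + 4 * k + 1) k) σ
          (Finset.Icc 1 (2 ^ n * (s - 4 * k) + 4 * k + 1)) y i).card :=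
    fun σ => exists_adversary rfl σ n le_rfl
  refine ⟨?_, fun σ => ?_⟩
  · rintro ⟨σ, hσ⟩
    obtain ⟨y, hy⟩ := main σ
    obtain ⟨i, hi, hle⟩ := hσ y fun i hi => card_pos.1 (by have := hy i hi; omega)
    have h1 := hy i hi
    have h2 : s - 4 * k ≤ (s - 4 * k) * 2 ^ (n - i) :=
      Nat.le_mul_of_pos_right _ (by positivity)
    omega
  · obtain ⟨y, hy⟩ := main σ
    exact ⟨y, fun i hi => card_pos.1 (by have := hy i hi; omega), hy⟩
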